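/- Let $d, T, K \geq 1$ and let $\lambda, \phi', \alpha \in \mathbb{R}$ with $1 \leq \phi' \leq \lambda$ and $\alpha \geq 0$. Let $\theta^* \in \mathbb{R}^d$, and let $w_{1,0},\dots,w_{K,0} \in [0,1]$. For each round $t \in \{1,\dots,T\}$ let $\mathcal{D}_t \subseteq \{x \in \mathbb{R}^d : \|x\|_2 \leq 1\}$ be a finite set with $|\mathcal{D}_t| \geq K$, let $\theta_{t-1} \in \mathbb{R}^d$ be any vector, and let $w_{t,1},\dots,w_{t,K} \in [0,1]$ be any weights satisfying $w_{k,0} \leq w_{t,k}$ for all $k$ and $\sum_{k=1}^{K} w_{t,k}^2 \leq \phi'$. Define $A_0 = \lambda I_d$, and in each round let $a_{1,t},\dots,a_{K,t} \in \mathcal{D}_t$ be chosen greedily by the index $x \mapsto \langle \theta_{t-1}, x\rangle + \alpha\sqrt{x^{\top} A_{t-1}^{-1} x}$ (each $a_{k,t}$ maximizing the index over $\mathcal{D}_t \setminus \{a_{1,t},\dots,a_{k-1,t}\}$), let $a^*_{1,t},\dots,a^*_{K,t} \in \mathcal{D}_t$ be distinct elements with the $K$ largest values of $\langle\theta^*,\cdot\rangle$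 ordered decreasingly, and set $A_t = A_{t-1} + \sum_{k=1}^{K} w_{t,k}^2\, a_{k,t} a_{k,t}^{\top}$. Assume the confidence event holds: $|\langle x, \theta^* - \theta_{t-1}\rangle| \leq \alpha\sqrt{x^{\top} A_{t-1}^{-1} x}$ for every $t \leq T$ and every $x \in \mathcal{D}_t$. Then $\sum_{t=1}^{T}\sum_{k=1}^{K} w_{k,0}\bigl(\langle\theta^*, a^*_{k,t}\rangle - \langle\theta^*, a_{k,t}\rangle\bigr) \leq 2\alpha\sqrt{2 T K d \ln\bigl(1 + \tfrac{\phi' T}{\lambda d}\bigr)}$. -/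

import Mathlib

/-! Two ideas carry the proof. First, of the `k` best arms at least one, `a*ⱼ` with `j ≤ k`, is
still available when slot `k` is filled, so greediness and the confidence bounds give
`⟨θ*, a*ₖ⟩ ≤ ⟨θ*, a*ⱼ⟩ ≤ index(a*ⱼ) ≤ index(aₖ)`: the gap in slot `k` is at most twice the
confidence width of `aₖ`, and the widths are summed by Cauchy-Schwarz. Secondly, a whole round is
one step `A ≤ A' ≤ c A` of the design matrix in the Loewner order, because the increment
`B = A' - A` satisfies `B ≤ (tr B) I ≤ φ' I` while `λ I ≤ A`. Normalising `A` to the identity and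
applying `x - 1 ≤ c log x` on `[1, c]` to the eigenvalues of the normalised `A'` gives
`tr (A⁻¹ B) ≤ c (log det A' - log det A)`. This telescopes, and `log det` is controlled by the trace
through concavity of the logarithm. -/

open Finset Matrix

lemma exists_le_forall_lt_ne {κ X : Type*} [Preorder κ] [LocallyFiniteOrderBot κ] (a : κ → X)
    {b : κ → X} (hb : Function.Injective b) (k : κ) : ∃ j ≤ k, ∀ i < k, a i ≠ b j := by
  classical
  have hcard : #((Iio k).image a) < #((Iic k).image b) :=
    calc #((Iio k).image a) ≤ #(Iio k) := card_image_le
      _ < #(Iic k) := card_lt_card <|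
          ⟨Iio_subset_Iic_self, fun h => lt_irrefl k (mem_Iio.mp (h (mem_Iic.mpr le_rfl)))⟩
      _ = #((Iic k).image b) := (card_image_of_injective _ hb).symm
  obtain ⟨x, hxb, hxa⟩ := exists_mem_notMem_of_card_lt_card hcard
  obtain ⟨j, hj, rfl⟩ := mem_image.mp hxb
  exact ⟨j, mem_Iic.mp hj, fun i hi h => hxa (mem_image.mpr ⟨i, mem_Iio.mpr hi, h⟩)⟩

lemma sub_le_two_mul_width_of_greedy {κ X : Type*} [Preorder κ] [LocallyFiniteOrderBot κ]
    {D : Set X} {reward estimate width : X → ℝ} {a b : κ → X}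
    (hconf : ∀ x ∈ D, |reward x - estimate x| ≤ width x) (haD : ∀ k, a k ∈ D)
    (hgreedy : ∀ k, ∀ x ∈ D, (∀ j < k, a j ≠ x) →
      estimate x + width x ≤ estimate (a k) + width (a k))
    (hbD : ∀ k, b k ∈ D) (hb : Function.Injective b)
    (hsorted : ∀ j k, j ≤ k → reward (b k) ≤ reward (b j)) (k : κ) :
    reward (b k) - reward (a k) ≤ 2 * width (a k) := by
  obtain ⟨j, hjk, hj⟩ := exists_le_forall_lt_ne a hb k
  have hoptimism : reward (b j) ≤ estimate (b j) + width (b j) := by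
    linarith [le_of_abs_le (hconf _ (hbD j))]
  have hchosen : estimate (a k) ≤ reward (a k) + width (a k) := by
    linarith [neg_le_of_abs_le (hconf _ (haD k))]
  linarith [hsorted j k hjk, hgreedy k _ (hbD j) hj]

lemma sum_mul_sqrt_le_sqrt_card_mul_sum {ι : Type*} (s : Finset ι) (w : ι → ℝ) {q : ι → ℝ}
    (hq : ∀ i ∈ s, 0 ≤ q i) : ∑ i ∈ s, w i * √(q i) ≤ √(#s * ∑ i ∈ s, w i ^ 2 * q i) := by
  refine Real.le_sqrt_of_sq_le (sq_sum_le_card_mul_sum_sq.trans_eq ?_)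
  congr 1
  exact sum_congr rfl fun i hi => by rw [mul_pow, Real.sq_sqrt (hq i hi)]

lemma sub_one_le_mul_log {c x : ℝ} (hx : 1 ≤ x) (hxc : x ≤ c) : x - 1 ≤ c * Real.log x := by
  have hx0 : 0 < x := by linarith
  calc x - 1 = x * (1 - x⁻¹) := by field_simp
    _ ≤ c * (1 - x⁻¹) :=
        mul_le_mul_of_nonneg_right hxc (sub_nonneg.mpr (inv_le_one_of_one_le₀ hx))
    _ ≤ c * Real.log x :=
        mul_le_mul_of_nonneg_left (Real.one_sub_inv_le_log_of_pos hx0) (hx0.le.trans hxc)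

section LoewnerOrder

open scoped MatrixOrder

lemma posDef_of_le {n : Type*} {A B : Matrix n n ℝ} (hA : A.PosDef) (hAB : A ≤ B) :
    B.PosDef := by
  simpa using hA.add_posSemidef (le_iff.mp hAB)

variable {n : Type*} [Fintype n] [DecidableEq n]

lemma smul_one_le_iff_forall_le_eigenvalues {N : Matrix n n ℝ} (hN : N.IsHermitian) {r : ℝ} :
    r • 1 ≤ N ↔ ∀ i, r ≤ hN.eigenvalues i := by
  rw [← Algebra.algebraMap_eq_smul_one, algebraMap_le_iff_le_spectrum hN.isSelfAdjoint,
    hN.spectrum_real_eq_range_eigenvalues, Set.forall_mem_range]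

lemma le_smul_one_iff_forall_eigenvalues_le {N : Matrix n n ℝ} (hN : N.IsHermitian) {r : ℝ} :
    N ≤ r • 1 ↔ ∀ i, hN.eigenvalues i ≤ r := by
  rw [← Algebra.algebraMap_eq_smul_one, le_algebraMap_iff_spectrum_le hN.isSelfAdjoint,
    hN.spectrum_real_eq_range_eigenvalues, Set.forall_mem_range]

lemma le_trace_smul_one {B : Matrix n n ℝ} (hB : 0 ≤ B) : B ≤ B.trace • 1 := by
  have hpsd := nonneg_iff_posSemidef.mp hB
  rw [le_smul_one_iff_forall_eigenvalues_le hpsd.isHermitian,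
    hpsd.isHermitian.trace_eq_sum_eigenvalues]
  exact fun i => single_le_sum (fun j _ => hpsd.eigenvalues_nonneg j) (mem_univ i)

lemma trace_sub_one_le_mul_log_det {N : Matrix n n ℝ} {c : ℝ} (hN : 1 ≤ N) (hNc : N ≤ c • 1) :
    (N - 1).trace ≤ c * Real.log N.det := by
  have hpos : N.PosDef := posDef_of_le PosDef.one hN
  have hH := hpos.isHermitian
  have hge : ∀ i, 1 ≤ hH.eigenvalues i :=
    (smul_one_le_iff_forall_le_eigenvalues hH).mp (by rwa [one_smul])
  have hle : ∀ i, hH.eigenvalues i ≤ c := (le_smul_one_iff_forall_eigenvalues_le hH).mp hNc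
  calc (N - 1).trace = ∑ i, (hH.eigenvalues i - 1) := by
        rw [trace_sub, hH.trace_eq_sum_eigenvalues, trace_one, sum_sub_distrib]
        simp
    _ ≤ ∑ i, c * Real.log (hH.eigenvalues i) :=
        sum_le_sum fun i _ => sub_one_le_mul_log (hge i) (hle i)
    _ = c * Real.log N.det := by
        rw [← mul_sum, hH.det_eq_prod_eigenvalues,
          ← Real.log_prod fun i _ => (hpos.eigenvalues_pos i).ne']
        simp

lemma trace_inv_mul_sub_le_mul_log_det_sub {A A' : Matrix n n ℝ} {c : ℝ} (hA : A.PosDef)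
    (hle : A ≤ A') (hlec : A' ≤ c • A) :
    (A⁻¹ * (A' - A)).trace ≤ c * (Real.log A'.det - Real.log A.det) := by
  obtain ⟨C, hC⟩ : ∃ C : Matrix n n ℝ, A⁻¹ = Cᴴ * C :=
    CStarAlgebra.nonneg_iff_eq_star_mul_self.mp hA.inv.posSemidef.nonneg
  have hnormalize : C * A * Cᴴ = 1 := by
    rw [mul_eq_one_comm, ← Matrix.mul_assoc, ← hC, nonsing_inv_mul _ hA.det_pos.ne'.isUnit]
  have hlower : 1 ≤ C * A' * Cᴴ := hnormalize ▸ star_right_conjugate_le_conjugate hle C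
  have hupper : C * A' * Cᴴ ≤ c • 1 := by
    have h := star_right_conjugate_le_conjugate hlec C
    rwa [star_eq_conjTranspose, mul_smul_comm, smul_mul_assoc, hnormalize] at h
  have htrace : (C * A' * Cᴴ - 1).trace = (A⁻¹ * (A' - A)).trace := by
    rw [← hnormalize, ← Matrix.sub_mul, ← Matrix.mul_sub, trace_mul_comm, ← Matrix.mul_assoc, hC]
  have hdet : (C * A' * Cᴴ).det = A'.det / A.det := by
    have hdet_one : C.det * A.det * Cᴴ.det = 1 := by
      rw [← det_mul, ← det_mul, hnormalize, det_one]
    rw [eq_div_iff hA.det_pos.ne', det_mul, det_mul]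
    linear_combination A'.det * hdet_one
  have hA' := posDef_of_le hA hle
  rw [← htrace, ← Real.log_div hA'.det_pos.ne' hA.det_pos.ne', ← hdet]
  exact trace_sub_one_le_mul_log_det hlower hupper

lemma sum_trace_inv_mul_sub_le_mul_log_det_sub {A : ℕ → Matrix n n ℝ} {T : ℕ} {c : ℝ}
    (h0 : (A 0).PosDef) (hmono : MonotoneOn A (Set.Iic T))
    (hgrowth : ∀ t < T, A (t + 1) ≤ c • A t) :
    ∑ t ∈ range T, ((A t)⁻¹ * (A (t + 1) - A t)).trace ≤
      c * (Real.log (A T).det - Real.log (A 0).det) := by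
  rw [← sum_range_sub (fun t => Real.log (A t).det), mul_sum]
  refine sum_le_sum fun t ht => ?_
  have htT : t < T := mem_range.mp ht
  exact trace_inv_mul_sub_le_mul_log_det_sub
    (posDef_of_le h0 (hmono (Nat.zero_le T) htT.le t.zero_le))
    (hmono htT.le htT t.le_succ) (hgrowth t htT)

lemma log_det_le_card_mul_log_trace_div [Nonempty n] {A : Matrix n n ℝ} (hA : A.PosDef) :
    Real.log A.det ≤ Fintype.card n * Real.log (A.trace / Fintype.card n) := by
  have hcard : (0 : ℝ) < Fintype.card n := by exact_mod_cast Fintype.card_pos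
  have hpos := hA.eigenvalues_pos
  have hjensen := strictConcaveOn_log_Ioi.concaveOn.le_map_sum (t := univ)
    (w := fun _ : n => (Fintype.card n : ℝ)⁻¹) (p := hA.isHermitian.eigenvalues)
    (fun _ _ => by positivity) (by simp [hcard.ne']) fun i _ => hpos i
  simp only [smul_eq_mul, ← mul_sum, ← Real.log_prod fun i _ => (hpos i).ne'] at hjensen
  rw [hA.isHermitian.det_eq_prod_eigenvalues, hA.isHermitian.trace_eq_sum_eigenvalues,
    ← inv_mul_le_iff₀ hcard, div_eq_inv_mul]
  exact hjensen

lemma le_smul_of_trace_sub_le {A A' : Matrix n n ℝ} {c lam phi : ℝ} (hlam : 0 < lam)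
    (hc : lam + phi ≤ c * lam) (hlamA : lam • 1 ≤ A) (hle : A ≤ A')
    (htrace : (A' - A).trace ≤ phi) : A' ≤ c • A := by
  have hB : 0 ≤ A' - A := sub_nonneg.mpr hle
  have htrace_nonneg : 0 ≤ (A' - A).trace := (nonneg_iff_posSemidef.mp hB).trace_nonneg
  have hc1 : 0 ≤ c - 1 := nonneg_of_mul_nonneg_left (by linarith : 0 ≤ (c - 1) * lam) hlam
  have hsub : A' - A ≤ (c - 1) • A :=
    calc A' - A ≤ (A' - A).trace • 1 := le_trace_smul_one hB
      _ ≤ ((c - 1) * lam) • 1 := smul_le_smul_of_nonneg_right (by linarith) zero_le_one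
      _ = (c - 1) • lam • 1 := mul_smul _ _ _
      _ ≤ (c - 1) • A := smul_le_smul_of_nonneg_left hlamA hc1
  rwa [sub_smul, one_smul, sub_le_sub_iff_right] at hsub

lemma log_det_sub_log_det_le [Nonempty n] {A : ℕ → Matrix n n ℝ} {T : ℕ} {lam phi : ℝ}
    (hlam : 0 < lam) (hphi : 0 ≤ phi) (hA0 : A 0 = lam • 1) (hle : A 0 ≤ A T)
    (htrace : ∀ t < T, (A (t + 1) - A t).trace ≤ phi) :
    Real.log (A T).det - Real.log (A 0).det ≤
      Fintype.card n * Real.log (1 + phi * T / (lam * Fintype.card n)) := by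
  have hcard : (0 : ℝ) < Fintype.card n := by exact_mod_cast Fintype.card_pos
  have hA0pos : (A 0).PosDef := hA0 ▸ PosDef.one.smul hlam
  have hATpos : (A T).PosDef := posDef_of_le hA0pos hle
  have htraceT : (A T).trace ≤ Fintype.card n * lam + T * phi := by
    have hsum : ∑ t ∈ range T, (A (t + 1) - A t).trace ≤ T * phi := by
      simpa using sum_le_card_nsmul (range T) _ phi fun t ht => htrace t (mem_range.mp ht)
    rw [← trace_sum, sum_range_sub, trace_sub, hA0, trace_smul, trace_one, smul_eq_mul] at hsum
    linarith
  have hmean : (A T).trace / Fintype.card n ≤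
      lam * (1 + phi * T / (lam * Fintype.card n)) := by
    rw [div_le_iff₀ hcard]
    refine htraceT.trans_eq ?_
    field_simp
  calc Real.log (A T).det - Real.log (A 0).det
      ≤ Fintype.card n * Real.log ((A T).trace / Fintype.card n) -
          Fintype.card n * Real.log lam := by
        gcongr
        · exact log_det_le_card_mul_log_trace_div hATpos
        · simp [hA0]
    _ ≤ Fintype.card n * Real.log (lam * (1 + phi * T / (lam * Fintype.card n))) -
          Fintype.card n * Real.log lam := by
        gcongr
        exact div_pos hATpos.trace_pos hcard
    _ = Fintype.card n * Real.log (1 + phi * T / (lam * Fintype.card n)) := by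
        rw [Real.log_mul hlam.ne' (by positivity)]
        ring

lemma sum_trace_inv_mul_sub_le_mul_log [Nonempty n] {A : ℕ → Matrix n n ℝ} {T : ℕ}
    {c lam phi : ℝ} (hlam : 0 < lam) (hphi : 0 ≤ phi) (hc : lam + phi ≤ c * lam)
    (hA0 : A 0 = lam • 1) (hmono : MonotoneOn A (Set.Iic T))
    (htrace : ∀ t < T, (A (t + 1) - A t).trace ≤ phi) :
    ∑ t ∈ range T, ((A t)⁻¹ * (A (t + 1) - A t)).trace ≤
      c * (Fintype.card n * Real.log (1 + phi * T / (lam * Fintype.card n))) := by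
  have hge : ∀ t ≤ T, lam • 1 ≤ A t := fun t ht => hA0 ▸ hmono T.zero_le ht t.zero_le
  have hgrowth : ∀ t < T, A (t + 1) ≤ c • A t := fun t ht =>
    le_smul_of_trace_sub_le hlam hc (hge t ht.le) (hmono ht.le ht t.le_succ) (htrace t ht)
  have hc0 : 0 ≤ c := nonneg_of_mul_nonneg_left (by linarith : 0 ≤ c * lam) hlam
  calc ∑ t ∈ range T, ((A t)⁻¹ * (A (t + 1) - A t)).trace
      ≤ c * (Real.log (A T).det - Real.log (A 0).det) :=
        sum_trace_inv_mul_sub_le_mul_log_det_sub (hA0 ▸ PosDef.one.smul hlam) hmono hgrowth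
    _ ≤ _ := mul_le_mul_of_nonneg_left
        (log_det_sub_log_det_le hlam hphi hA0 (hA0 ▸ hge T le_rfl) htrace) hc0

end LoewnerOrder

section WeightedGram

variable {n κ : Type*} [Fintype κ]

/-- The weighted Gram matrix `∑ₖ wₖ² aₖ aₖᵀ`: the increment of the design matrix in a round in which
slot `k` shows the arm `aₖ` and is examined with probability `wₖ`. The weights enter squared. -/
def weightedGram (w : κ → ℝ) (a : κ → n → ℝ) : Matrix n n ℝ :=
  ∑ k, w k ^ 2 • vecMulVec (a k) (a k)

lemma posSemidef_weightedGram [Finite n] (w : κ → ℝ) (a : κ → n → ℝ) :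
    (weightedGram w a).PosSemidef := by
  refine posSemidef_sum _ fun k _ => ?_
  simpa using (posSemidef_vecMulVec_self_star (a k)).smul (sq_nonneg (w k))

lemma trace_mul_weightedGram [Fintype n] (M : Matrix n n ℝ) (w : κ → ℝ) (a : κ → n → ℝ) :
    (M * weightedGram w a).trace = ∑ k, w k ^ 2 * (a k ⬝ᵥ (M *ᵥ a k)) := by
  simp only [weightedGram, mul_sum, trace_sum, mul_smul_comm, trace_smul, mul_vecMulVec,
    trace_vecMulVec, dotProduct_comm (M *ᵥ _), smul_eq_mul]

lemma trace_weightedGram_le [Fintype n] {w : κ → ℝ} {a : κ → n → ℝ} {phi : ℝ}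
    (ha : ∀ k, a k ⬝ᵥ a k ≤ 1) (hw : ∑ k, w k ^ 2 ≤ phi) : (weightedGram w a).trace ≤ phi := by
  refine le_trans ?_ hw
  simp only [weightedGram, trace_sum, trace_smul, trace_vecMulVec, smul_eq_mul]
  exact sum_le_sum fun k _ => mul_le_of_le_one_right (sq_nonneg _) (ha k)

open scoped MatrixOrder in
lemma monotoneOn_of_eq_add_weightedGram [Finite n] {T : ℕ} {A : ℕ → Matrix n n ℝ}
    {w : Fin T → κ → ℝ} {a : Fin T → κ → n → ℝ}
    (hAt : ∀ t : Fin T, A (t + 1) = A t + weightedGram (w t) (a t)) :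
    MonotoneOn A (Set.Iic T) :=
  monotoneOn_of_le_add_one Set.ordConnected_Iic fun t _ _ ht =>
    hAt ⟨t, ht⟩ ▸ le_add_of_nonneg_right (posSemidef_weightedGram _ _).nonneg

variable [Fintype n] [DecidableEq n] {T : ℕ} {lam phi c : ℝ} {A : ℕ → Matrix n n ℝ}
  {w : Fin T → κ → ℝ} {a : Fin T → κ → n → ℝ}

lemma sum_sum_sq_mul_quadForm_inv_le [Nonempty n] (hlam : 0 < lam) (hphi : 0 ≤ phi)
    (hc : lam + phi ≤ c * lam) (ha : ∀ t k, a t k ⬝ᵥ a t k ≤ 1) (hw : ∀ t, ∑ k, w t k ^ 2 ≤ phi)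
    (hA0 : A 0 = lam • 1) (hAt : ∀ t : Fin T, A (t + 1) = A t + weightedGram (w t) (a t)) :
    ∑ t : Fin T, ∑ k, w t k ^ 2 * (a t k ⬝ᵥ ((A t)⁻¹ *ᵥ a t k)) ≤
      c * (Fintype.card n * Real.log (1 + phi * T / (lam * Fintype.card n))) := by
  have hsub : ∀ t : Fin T, A (t + 1) - A t = weightedGram (w t) (a t) := fun t => by
    rw [hAt, add_sub_cancel_left]
  have htrace : ∀ t < T, (A (t + 1) - A t).trace ≤ phi := fun t ht =>
    (hsub ⟨t, ht⟩).symm ▸ trace_weightedGram_le (ha _) (hw _)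
  calc ∑ t : Fin T, ∑ k, w t k ^ 2 * (a t k ⬝ᵥ ((A t)⁻¹ *ᵥ a t k))
      = ∑ t : Fin T, ((A t)⁻¹ * (A (t + 1) - A t)).trace := by
        simp only [hsub, trace_mul_weightedGram]
    _ = ∑ t ∈ range T, ((A t)⁻¹ * (A (t + 1) - A t)).trace :=
        Fin.sum_univ_eq_sum_range (fun t => ((A t)⁻¹ * (A (t + 1) - A t)).trace) T
    _ ≤ _ := sum_trace_inv_mul_sub_le_mul_log hlam hphi hc hA0
        (monotoneOn_of_eq_add_weightedGram hAt) htrace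

lemma sum_sum_mul_sqrt_quadForm_inv_le [Nonempty n] (hlam : 0 < lam) (hphi : 0 ≤ phi)
    (hc : lam + phi ≤ c * lam) (ha : ∀ t k, a t k ⬝ᵥ a t k ≤ 1) (hw : ∀ t, ∑ k, w t k ^ 2 ≤ phi)
    (hA0 : A 0 = lam • 1) (hAt : ∀ t : Fin T, A (t + 1) = A t + weightedGram (w t) (a t)) :
    ∑ t : Fin T, ∑ k, w t k * √(a t k ⬝ᵥ ((A t)⁻¹ *ᵥ a t k)) ≤
      √(c * T * Fintype.card κ * Fintype.card n *
        Real.log (1 + phi * T / (lam * Fintype.card n))) := by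
  have hpos : ∀ t : Fin T, (A t).PosDef := fun t =>
    posDef_of_le (hA0 ▸ PosDef.one.smul hlam)
      (monotoneOn_of_eq_add_weightedGram hAt T.zero_le t.is_le' t.val.zero_le)
  have hquad : ∀ p ∈ (univ : Finset (Fin T × κ)),
      0 ≤ a p.1 p.2 ⬝ᵥ ((A p.1)⁻¹ *ᵥ a p.1 p.2) := fun p _ => by
    simpa using (hpos p.1).inv.posSemidef.dotProduct_mulVec_nonneg (a p.1 p.2)
  have hcs := sum_mul_sqrt_le_sqrt_card_mul_sum univ (fun p : Fin T × κ => w p.1 p.2) hquad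
  simp only [Fintype.sum_prod_type, card_univ, Fintype.card_prod, Fintype.card_fin,
    Nat.cast_mul] at hcs
  refine hcs.trans (Real.sqrt_le_sqrt ?_)
  calc _ ≤ T * Fintype.card κ *
        (c * (Fintype.card n * Real.log (1 + phi * T / (lam * Fintype.card n)))) :=
        mul_le_mul_of_nonneg_left (sum_sum_sq_mul_quadForm_inv_le hlam hphi hc ha hw hA0 hAt)
          (by positivity)
    _ = _ := by ring

end WeightedGram

/-- The smallest admissible `c` is `1 + phi / lam`; it is at most the constant `2` of the paper when
`phi ≤ lam`. -/
theorem stmt_15_general {n κ : Type*} [Fintype n] [DecidableEq n] [Nonempty n] [Fintype κ]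
    [Preorder κ] [LocallyFiniteOrderBot κ] {T : ℕ} {lam phi c α : ℝ} (hlam : 0 < lam)
    (hphi : 0 ≤ phi) (hc : lam + phi ≤ c * lam) (hα : 0 ≤ α) (θstar : n → ℝ)
    {w0 : κ → ℝ} (hw0 : ∀ k, 0 ≤ w0 k) (D : Fin T → Set (n → ℝ)) (θ : Fin T → n → ℝ)
    {w : Fin T → κ → ℝ} (hw0w : ∀ t k, w0 k ≤ w t k) (hwsum : ∀ t, ∑ k, w t k ^ 2 ≤ phi)
    {a b : Fin T → κ → n → ℝ} (ha : ∀ t k, a t k ⬝ᵥ a t k ≤ 1) {A : ℕ → Matrix n n ℝ}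
    (hA0 : A 0 = lam • 1) (hAt : ∀ t : Fin T, A (t + 1) = A t + weightedGram (w t) (a t))
    (haD : ∀ t k, a t k ∈ D t)
    (hgreedy : ∀ t k, ∀ x ∈ D t, (∀ j < k, a t j ≠ x) →
      θ t ⬝ᵥ x + α * √(x ⬝ᵥ ((A t)⁻¹ *ᵥ x)) ≤
        θ t ⬝ᵥ a t k + α * √(a t k ⬝ᵥ ((A t)⁻¹ *ᵥ a t k)))
    (hbD : ∀ t k, b t k ∈ D t) (hb : ∀ t, Function.Injective (b t))
    (hsorted : ∀ t j k, j ≤ k → θstar ⬝ᵥ b t k ≤ θstar ⬝ᵥ b t j)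
    (hconf : ∀ t : Fin T, ∀ x ∈ D t, |x ⬝ᵥ (θstar - θ t)| ≤ α * √(x ⬝ᵥ ((A t)⁻¹ *ᵥ x))) :
    ∑ t, ∑ k, w0 k * (θstar ⬝ᵥ b t k - θstar ⬝ᵥ a t k) ≤
      2 * α * √(c * T * Fintype.card κ * Fintype.card n *
        Real.log (1 + phi * T / (lam * Fintype.card n))) := by
  have hslot : ∀ t k, w0 k * (θstar ⬝ᵥ b t k - θstar ⬝ᵥ a t k) ≤
      2 * α * (w t k * √(a t k ⬝ᵥ ((A t)⁻¹ *ᵥ a t k))) := fun t k => by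
    have hgap := sub_le_two_mul_width_of_greedy (D := D t) (reward := (θstar ⬝ᵥ ·))
      (fun x hx => by simpa only [← sub_dotProduct, dotProduct_comm x (_ - _)] using hconf t x hx)
      (haD t) (hgreedy t) (hbD t) (hb t) (hsorted t) k
    calc w0 k * (θstar ⬝ᵥ b t k - θstar ⬝ᵥ a t k)
        ≤ w0 k * (2 * (α * √(a t k ⬝ᵥ ((A t)⁻¹ *ᵥ a t k)))) :=
          mul_le_mul_of_nonneg_left hgap (hw0 k)
      _ ≤ w t k * (2 * (α * √(a t k ⬝ᵥ ((A t)⁻¹ *ᵥ a t k)))) :=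
          mul_le_mul_of_nonneg_right (hw0w t k) (by positivity)
      _ = 2 * α * (w t k * √(a t k ⬝ᵥ ((A t)⁻¹ *ᵥ a t k))) := by ring
  calc ∑ t, ∑ k, w0 k * (θstar ⬝ᵥ b t k - θstar ⬝ᵥ a t k)
      ≤ ∑ t, ∑ k, 2 * α * (w t k * √(a t k ⬝ᵥ ((A t)⁻¹ *ᵥ a t k))) :=
        sum_le_sum fun t _ => sum_le_sum fun k _ => hslot t k
    _ = 2 * α * ∑ t, ∑ k, w t k * √(a t k ⬝ᵥ ((A t)⁻¹ *ᵥ a t k)) := by simp only [mul_sum]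
    _ ≤ _ := mul_le_mul_of_nonneg_left
        (sum_sum_mul_sqrt_quadForm_inv_le hlam hphi hc ha hwsum hA0 hAt) (by positivity)

/-- Deterministic core of Theorem 1 of the paper: on the confidence event, the
cumulative weighted regret of the UBM-LinUCB algorithm over `T` rounds is bounded by
`2α √(2TKd ln(1 + φ'T/(λd)))`.  For `t : Fin T`, `A ↑t` is the design matrix `A_{t-1}`
and `θ t` the ridge estimate `θ_{t-1}` available at the start of round `t`. -/
theorem stmt_15 (d T K : ℕ) (hd : 1 ≤ d) (hT : 1 ≤ T) (hK : 1 ≤ K)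
    (lam phi α : ℝ) (hphi : 1 ≤ phi) (hlam : phi ≤ lam) (hα : 0 ≤ α)
    (θstar : Fin d → ℝ)
    (w0 : Fin K → ℝ) (hw0 : ∀ k, w0 k ∈ Set.Icc (0 : ℝ) 1)
    -- the candidate arm sets, with unit-norm features and at least `K` arms
    (D : Fin T → Finset (Fin d → ℝ))
    (hDnorm : ∀ t, ∀ x ∈ D t, Real.sqrt (x ⬝ᵥ x) ≤ 1)
    (hDcard : ∀ t, K ≤ (D t).card)
    -- the ridge estimates
    (θ : Fin T → (Fin d → ℝ))
    -- the examination weights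
    (w : Fin T → Fin K → ℝ) (hw : ∀ t k, w t k ∈ Set.Icc (0 : ℝ) 1)
    (hw0w : ∀ t k, w0 k ≤ w t k)
    (hwsum : ∀ t, ∑ k : Fin K, (w t k) ^ 2 ≤ phi)
    -- the selected arms and the optimal arms
    (a astar : Fin T → Fin K → (Fin d → ℝ))
    -- the design matrices
    (A : ℕ → Matrix (Fin d) (Fin d) ℝ)
    (hA0 : A 0 = lam • (1 : Matrix (Fin d) (Fin d) ℝ))
    (hAt : ∀ t : Fin T,
      A (t + 1) = A t + ∑ k : Fin K, (w t k) ^ 2 • vecMulVec (a t k) (a t k))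
    -- the arms are chosen greedily by the upper confidence index
    (haD : ∀ t k, a t k ∈ D t)
    (haInj : ∀ t, Function.Injective (a t))
    (haGreedy : ∀ t : Fin T, ∀ k : Fin K, ∀ x ∈ D t, (∀ j : Fin K, j < k → a t j ≠ x) →
      θ t ⬝ᵥ x + α * Real.sqrt (x ⬝ᵥ ((A t)⁻¹ *ᵥ x)) ≤
        θ t ⬝ᵥ (a t k) + α * Real.sqrt (a t k ⬝ᵥ ((A t)⁻¹ *ᵥ a t k)))
    -- the optimal arms have the `K` largest true values, ordered decreasingly
    (hastarD : ∀ t k, astar t k ∈ D t)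
    (hastarInj : ∀ t, Function.Injective (astar t))
    (hastarSorted : ∀ t : Fin T, ∀ j k : Fin K, j ≤ k →
      θstar ⬝ᵥ astar t k ≤ θstar ⬝ᵥ astar t j)
    (hastarTop : ∀ t : Fin T, ∀ k : Fin K, ∀ x ∈ D t,
      (∀ j : Fin K, j ≤ k → astar t j ≠ x) → θstar ⬝ᵥ x ≤ θstar ⬝ᵥ astar t k)
    -- the confidence event
    (hconf : ∀ t : Fin T, ∀ x ∈ D t,
      |x ⬝ᵥ (θstar - θ t)| ≤ α * Real.sqrt (x ⬝ᵥ ((A t)⁻¹ *ᵥ x))) :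
    ∑ t : Fin T, ∑ k : Fin K, w0 k * (θstar ⬝ᵥ astar t k - θstar ⬝ᵥ a t k) ≤
      2 * α * Real.sqrt (2 * T * K * d * Real.log (1 + phi * T / (lam * d))) := by
  have : Nonempty (Fin d) := Fin.pos_iff_nonempty.mp hd
  simpa only [Fintype.card_fin] using stmt_15_general (by linarith : 0 < lam) (by linarith)
    (by linarith : lam + phi ≤ 2 * lam) hα θstar (fun k => (hw0 k).1) (fun t => ↑(D t)) θ hw0w hwsum
    (fun t k => Real.sqrt_le_one.mp (hDnorm t _ (haD t k))) hA0 hAt haD haGreedy hastarD hastarInj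
    hastarSorted hconf
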